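/- Let 1 ≤ q < p < ∞, let μ, ν be positive measures on (X, 𝒯) with 0 < μ(I) < ∞ and ν(I) < ∞ for all I ∈ 𝓛, and let α = {α_I : I ∈ 𝓛} be nonnegative constants. The vector-valued inequality ∫_X (Σ_{I ∈ 𝓛} |α_I · E_I^μ f|^q)^{p/q} dν ≤ C^p ∫_X |f|^p dμ for all f ∈ L^p(μ) holds with some finite C if and only if the scalar inequality ∫_X |Σ_{I ∈ 𝓛} α_I^q · E_I^μ h|^{p/q} dν ≤ C'^{p/q} ∫_X |h|^{p/q} dμ for all h ∈ L^{p/q}(μ) holds with some finite C'; moreover C^q and C' are comparable with constants depending only on p and q. -/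

import Mathlib

open MeasureTheory ENNReal NNReal Set Filter

/-- A lattice of measurable sets on a measurable space `X`: a union of countable
generations, each generation being a countable disjoint cover of `X`, and each set of
generation `n` being a (countable) disjoint union of sets of generation `n+1`. -/
structure LatticeFamily (X : Type*) [MeasurableSpace X] where
  gen : ℤ → Set (Set X)
  countable : ∀ n, (gen n).Countable
  meas : ∀ n, ∀ I ∈ gen n, MeasurableSet I
  pairwiseDisjoint : ∀ n, (gen n).PairwiseDisjoint id
  cover : ∀ n, ⋃₀ gen n = univ
  subdiv : ∀ n, ∀ I ∈ gen n, ∃ S ⊆ gen (n + 1), I = ⋃₀ S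

/-- The collection of all sets of the lattice. -/
def LatticeFamily.sets {X : Type*} [MeasurableSpace X] (L : LatticeFamily X) : Set (Set X) :=
  ⋃ n, L.gen n

/-- The averaging operator `E_I^μ f = (μ(I)⁻¹ ∫_I f dμ) · 1_I`. -/
noncomputable def avgOp {X : Type*} [MeasurableSpace X] (μ : Measure X) (I : Set X)
    (f : X → ℝ≥0∞) : X → ℝ≥0∞ :=
  I.indicator fun _ => (∫⁻ y in I, f y ∂μ) / μ I

/-- The lattice maximal function `M_μ f(x) = sup {E_I^μ f(x) : I ∈ 𝓛, x ∈ I}`. -/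
noncomputable def maxOp {X : Type*} [MeasurableSpace X] (L : LatticeFamily X) (μ : Measure X)
    (f : X → ℝ≥0∞) : X → ℝ≥0∞ := fun x =>
  ⨆ (I : Set X) (_ : I ∈ L.sets ∧ x ∈ I), (∫⁻ y in I, f y ∂μ) / μ I

/-!
Testing the scalar inequality on `h = f ^ q` gives the vector-valued one, by Jensen's inequality
`(E_I f) ^ q ≤ E_I (f ^ q)`. Conversely, test the vector-valued inequality on
`f = (M h) ^ (1 / q)`, where `M` is the lattice maximal function: since `M h ≥ E_I h` on `I`, one
has `E_I h ≤ (E_I f) ^ q`, while `∫ f ^ p = ∫ (M h) ^ (p / q)` is controlled by the maximal theorem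
because `p / q > 1`.
-/

open ProbabilityTheory

universe u

section

variable {X : Type*} [MeasurableSpace X] {μ ν : Measure X}

theorem mul_measure_sUnion_le_lintegral_of_finite {F : Set (Set X)} (hfin : F.Finite)
    (hmeas : ∀ I ∈ F, MeasurableSet I)
    (hnested : F.Pairwise fun I J => I ⊆ J ∨ J ⊆ I ∨ Disjoint I J) {f : X → ℝ≥0∞} {a : ℝ≥0∞}
    (ha : ∀ I ∈ F, a * μ I ≤ ∫⁻ x in I, f x ∂μ) :
    a * μ (⋃₀ F) ≤ ∫⁻ x, f x ∂μ := by
  set M : Set (Set X) := {I | Maximal (· ∈ F) I}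
  have hMF : M ⊆ F := fun I hI => hI.prop
  have hcover : ⋃₀ F ⊆ ⋃ I ∈ M, I := by
    rintro x ⟨I, hI, hxI⟩
    obtain ⟨J, hIJ, hJ⟩ := hfin.exists_le_maximal hI
    exact mem_biUnion hJ (hIJ hxI)
  have hdisj : M.PairwiseDisjoint fun I => I := fun I hI J hJ hne => by
    rcases hnested (hMF hI) (hMF hJ) hne with h | h | h
    · exact absurd (hI.eq_of_subset hJ.prop h) hne
    · exact absurd (hJ.eq_of_subset hI.prop h).symm hne
    · exact h
  have hcount : M.Countable := (hfin.subset hMF).countable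
  have hMmeas : ∀ I ∈ M, MeasurableSet I := fun I hI => hmeas I (hMF hI)
  calc a * μ (⋃₀ F) ≤ a * μ (⋃ I ∈ M, I) := by gcongr
    _ = ∑' I : M, a * μ I := by
      rw [measure_biUnion hcount hdisj hMmeas, ENNReal.tsum_mul_left]
    _ ≤ ∑' I : M, ∫⁻ x in I, f x ∂μ := ENNReal.tsum_le_tsum fun I => ha I (hMF I.2)
    _ = ∫⁻ x in ⋃ I ∈ M, I, f x ∂μ := (lintegral_biUnion hcount hMmeas hdisj f).symm
    _ ≤ ∫⁻ x, f x ∂μ := setLIntegral_le_lintegral _ _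

theorem mul_measure_sUnion_le_lintegral {F : Set (Set X)} (hcount : F.Countable)
    (hmeas : ∀ I ∈ F, MeasurableSet I)
    (hnested : F.Pairwise fun I J => I ⊆ J ∨ J ⊆ I ∨ Disjoint I J) {f : X → ℝ≥0∞} {a : ℝ≥0∞}
    (ha : ∀ I ∈ F, a * μ I ≤ ∫⁻ x in I, f x ∂μ) :
    a * μ (⋃₀ F) ≤ ∫⁻ x, f x ∂μ := by
  rcases F.eq_empty_or_nonempty with rfl | hne
  · simp
  obtain ⟨s, rfl⟩ := hcount.exists_eq_range hne
  rw [sUnion_range, measure_iUnion_eq_iSup_accumulate, ENNReal.mul_iSup]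
  refine iSup_le fun n => ?_
  have hsub : s '' Iic n ⊆ range s := image_subset_range s _
  have hacc : accumulate s n = ⋃₀ (s '' Iic n) := by
    rw [sUnion_image]; rfl
  rw [hacc]
  exact mul_measure_sUnion_le_lintegral_of_finite ((finite_Iic n).image s)
    (fun I hI => hmeas I (hsub hI)) (hnested.mono hsub) fun I hI => ha I (hsub hI)

theorem lintegral_ennreal_rpow_eq_lintegral_meas_lt_mul {f : X → ℝ≥0∞} (hf : AEMeasurable f μ)
    {s : ℝ} (hs : 0 < s) :
    ∫⁻ x, f x ^ s ∂μ = ENNReal.ofReal s *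
      ∫⁻ t in Ioi 0, μ {x | ENNReal.ofReal t < f x} * ENNReal.ofReal (t ^ (s - 1)) := by
  by_cases hfin : ∀ᵐ x ∂μ, f x ≠ ∞
  · calc ∫⁻ x, f x ^ s ∂μ = ∫⁻ x, ENNReal.ofReal ((f x).toReal ^ s) ∂μ := by
          refine lintegral_congr_ae (hfin.mono fun x hx => ?_)
          simp only [← ENNReal.ofReal_rpow_of_nonneg toReal_nonneg hs.le, ENNReal.ofReal_toReal hx]
      _ = ENNReal.ofReal s * ∫⁻ t in Ioi 0,
            μ {x | t < (f x).toReal} * ENNReal.ofReal (t ^ (s - 1)) :=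
          lintegral_rpow_eq_lintegral_meas_lt_mul μ (ae_of_all _ fun _ => toReal_nonneg)
            hf.ennreal_toReal hs
      _ = _ := by
          congr 1
          refine setLIntegral_congr_fun measurableSet_Ioi fun t ht => ?_
          congr 1
          exact measure_congr (hfin.mono fun x hx =>
            propext (ENNReal.ofReal_lt_iff_lt_toReal (mem_Ioi.1 ht).le hx).symm)
  · have htop : μ {x | f x = ∞} ≠ 0 := by simpa [ae_iff] using hfin
    have hdiv : ∫⁻ t in Ioi (0 : ℝ), ENNReal.ofReal (t ^ (s - 1)) = ∞ := by
      by_contra hne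
      refine not_integrableOn_Ioi_rpow (s - 1)
        ((lintegral_ofReal_ne_top_iff_integrable (by fun_prop) ?_).1 hne)
      exact (ae_restrict_mem measurableSet_Ioi).mono fun t ht => Real.rpow_nonneg ht.le _
    have hleft : ∫⁻ x, f x ^ s ∂μ = ∞ :=
      lintegral_eq_top_of_measure_eq_top_ne_zero (hf.pow_const s)
        (by simpa [ENNReal.rpow_eq_top_iff, hs, hs.not_gt] using htop)
    have hright : ∫⁻ t in Ioi 0, μ {x | ENNReal.ofReal t < f x} *
        ENNReal.ofReal (t ^ (s - 1)) = ∞ := by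
      refine eq_top_iff.2 ?_
      calc ∞ = ∫⁻ t in Ioi (0 : ℝ), μ {x | f x = ∞} * ENNReal.ofReal (t ^ (s - 1)) := by
            rw [lintegral_const_mul _ (by fun_prop), hdiv, ENNReal.mul_top htop]
        _ ≤ _ := by
            gcongr with t x
            intro hx
            simp [hx]
    rw [hleft, hright, ENNReal.mul_top (by simpa using hs)]

theorem lintegral_rpow_le_of_mul_meas_lt_le {r : ℝ} (hr : 1 < r) {f g : X → ℝ≥0∞}
    (hf : Measurable f) (hg : Measurable g)
    (hweak : ∀ t : ℝ, 0 < t → ENNReal.ofReal t * μ {x | ENNReal.ofReal t < g x} ≤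
      ∫⁻ x in {x | ENNReal.ofReal t < f x}, f x ∂μ) :
    ∫⁻ x, g x ^ r ∂μ ≤ ENNReal.ofReal r / ENNReal.ofReal (r - 1) * ∫⁻ x, f x ^ r ∂μ := by
  have hr1 : 0 < r - 1 := sub_pos.2 hr
  -- The weak-type bound trades `μ` for the measure with density `f`, at the cost of one power of
  -- `t`; the layer cake formula for that measure then restores the missing factor `f`.
  have hlayer : ∀ t ∈ Ioi (0 : ℝ),
      μ {x | ENNReal.ofReal t < g x} * ENNReal.ofReal (t ^ (r - 1)) ≤
        μ.withDensity f {x | ENNReal.ofReal t < f x} * ENNReal.ofReal (t ^ (r - 1 - 1)) := by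
    intro t ht
    have hpow : t ^ (r - 1) = t * t ^ (r - 1 - 1) := by
      rw [← Real.rpow_one_add' (mem_Ioi.1 ht).le (by linarith)]
      ring_nf
    rw [hpow, ENNReal.ofReal_mul (mem_Ioi.1 ht).le, ← mul_assoc, mul_comm (μ _),
      withDensity_apply _ (measurableSet_lt measurable_const hf)]
    gcongr
    exact hweak t ht
  have hdensity : ∫⁻ x, f x ^ (r - 1) ∂μ.withDensity f = ∫⁻ x, f x ^ r ∂μ := by
    rw [lintegral_withDensity_eq_lintegral_mul _ hf (hf.pow_const _)]
    refine lintegral_congr fun x => ?_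
    calc f x * f x ^ (r - 1) = f x ^ (1 : ℝ) * f x ^ (r - 1) := by rw [ENNReal.rpow_one]
      _ = f x ^ r := by rw [← ENNReal.rpow_add_of_nonneg _ _ one_pos.le hr1.le]; ring_nf
  have hr1' : ENNReal.ofReal (r - 1) ≠ 0 := by simpa using hr
  calc ∫⁻ x, g x ^ r ∂μ
      = ENNReal.ofReal r * ∫⁻ t in Ioi 0,
          μ {x | ENNReal.ofReal t < g x} * ENNReal.ofReal (t ^ (r - 1)) :=
        lintegral_ennreal_rpow_eq_lintegral_meas_lt_mul hg.aemeasurable (by linarith)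
    _ ≤ ENNReal.ofReal r * ∫⁻ t in Ioi 0,
          μ.withDensity f {x | ENNReal.ofReal t < f x} * ENNReal.ofReal (t ^ (r - 1 - 1)) := by
        gcongr 1
        exact setLIntegral_mono' measurableSet_Ioi hlayer
    _ = ENNReal.ofReal r / ENNReal.ofReal (r - 1) * ∫⁻ x, f x ^ (r - 1) ∂μ.withDensity f := by
        rw [lintegral_ennreal_rpow_eq_lintegral_meas_lt_mul hf.aemeasurable hr1, ← mul_assoc,
          ENNReal.div_mul_cancel hr1' ofReal_ne_top]
    _ = _ := by rw [hdensity]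

theorem rpow_lintegral_le_lintegral_rpow [IsProbabilityMeasure μ] {f : X → ℝ≥0∞}
    (hf : AEStronglyMeasurable f μ) {q : ℝ} (hq : 1 ≤ q) :
    (∫⁻ x, f x ∂μ) ^ q ≤ ∫⁻ x, f x ^ q ∂μ := by
  have hnorm := eLpNorm'_le_eLpNorm'_of_exponent_le one_pos hq μ hf
  simp only [eLpNorm', enorm_eq_self, ENNReal.rpow_one, one_div, inv_one] at hnorm
  exact (ENNReal.le_rpow_inv_iff (by linarith)).1 hnorm

section avgOp

variable {I : Set X} {f : X → ℝ≥0∞} {x : X}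

theorem avgOp_of_mem (hx : x ∈ I) : avgOp μ I f x = ∫⁻ y, f y ∂μ[|I] := by
  rw [avgOp, indicator_of_mem hx, ProbabilityTheory.cond, lintegral_smul_measure, smul_eq_mul,
    ENNReal.div_eq_inv_mul]

theorem avgOp_of_notMem (hx : x ∉ I) : avgOp μ I f x = 0 :=
  indicator_of_notMem hx _

theorem measurable_avgOp (hI : MeasurableSet I) (f : X → ℝ≥0∞) : Measurable (avgOp μ I f) :=
  measurable_const.indicator hI

theorem avgOp_rpow_le (h0 : μ I ≠ 0) (htop : μ I ≠ ∞) (hf : Measurable f) {q : ℝ} (hq : 1 ≤ q)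
    (x : X) : avgOp μ I f x ^ q ≤ avgOp μ I (fun y => f y ^ q) x := by
  by_cases hx : x ∈ I
  · have := cond_isProbabilityMeasure_of_finite h0 htop
    simpa only [avgOp_of_mem hx] using
      rpow_lintegral_le_lintegral_rpow hf.aestronglyMeasurable hq
  · simp [avgOp_of_notMem hx, zero_lt_one.trans_le hq]

end avgOp

namespace LatticeFamily

variable (L : LatticeFamily X)

theorem subset_of_mem_gen {m n : ℤ} (hmn : m ≤ n) {I J : Set X} (hI : I ∈ L.gen m)
    (hJ : J ∈ L.gen n) {x : X} (hxI : x ∈ I) (hxJ : x ∈ J) : J ⊆ I := by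
  induction n, hmn using Int.leInduction generalizing J with
  | base => exact ((L.pairwiseDisjoint m).elim_set hJ hI x hxJ hxI).subset
  | succ n _ ih =>
    obtain ⟨P, hP, hxP⟩ : x ∈ ⋃₀ L.gen n := L.cover n ▸ mem_univ x
    obtain ⟨S, hS, rfl⟩ := L.subdiv n P hP
    obtain ⟨J', hJ', hxJ'⟩ := hxP
    obtain rfl : J' = J := (L.pairwiseDisjoint _).elim_set (hS hJ') hJ x hxJ' hxJ
    exact (subset_sUnion_of_mem hJ').trans (ih hP ⟨J', hJ', hxJ'⟩)

theorem pairwise_subset_or_disjoint :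
    L.sets.Pairwise fun I J => I ⊆ J ∨ J ⊆ I ∨ Disjoint I J := by
  intro I hI J hJ _
  obtain ⟨m, hm⟩ := mem_iUnion.1 hI
  obtain ⟨n, hn⟩ := mem_iUnion.1 hJ
  by_cases hdisj : Disjoint I J
  · exact Or.inr (Or.inr hdisj)
  obtain ⟨x, hxI, hxJ⟩ := not_disjoint_iff.1 hdisj
  rcases le_total m n with hmn | hnm
  · exact Or.inr (Or.inl (L.subset_of_mem_gen hmn hm hn hxI hxJ))
  · exact Or.inl (L.subset_of_mem_gen hnm hn hm hxJ hxI)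

theorem countable_sets : L.sets.Countable :=
  countable_iUnion L.countable

variable {L} in
theorem measurableSet_of_mem_sets {I : Set X} (hI : I ∈ L.sets) : MeasurableSet I := by
  obtain ⟨n, hn⟩ := mem_iUnion.1 hI
  exact L.meas n I hn

end LatticeFamily

section maxOp

variable {L : LatticeFamily X} {f : X → ℝ≥0∞}

theorem maxOp_eq_iSup_avgOp (L : LatticeFamily X) (μ : Measure X) (f : X → ℝ≥0∞) :
    maxOp L μ f = fun x => ⨆ I : L.sets, avgOp μ I f x := by
  ext x
  simp only [maxOp, iSup_subtype, iSup_and]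
  refine iSup_congr fun I => iSup_congr fun _ => ?_
  by_cases hx : x ∈ I <;> simp [avgOp, hx]

theorem avgOp_le_maxOp {I : Set X} (hI : I ∈ L.sets) (x : X) :
    avgOp μ I f x ≤ maxOp L μ f x := by
  rw [maxOp_eq_iSup_avgOp]
  exact le_iSup (fun J : L.sets => avgOp μ J f x) ⟨I, hI⟩

theorem measurable_maxOp : Measurable (maxOp L μ f) := by
  have : Countable L.sets := L.countable_sets.to_subtype
  rw [maxOp_eq_iSup_avgOp]
  exact Measurable.iSup fun I => measurable_avgOp (LatticeFamily.measurableSet_of_mem_sets I.2) f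

theorem maxOp_le_maxOp_indicator_add (a : ℝ≥0∞) (x : X) :
    maxOp L μ f x ≤ maxOp L μ ({y | a < f y}.indicator f) x + a := by
  rw [maxOp_eq_iSup_avgOp]
  refine iSup_le fun I => ?_
  by_cases hx : x ∈ I.1
  · have hsplit : ∀ y, f y ≤ {y | a < f y}.indicator f y + a := fun y => by
      by_cases hy : a < f y
      · simp [hy]
      · simpa [hy] using not_lt.1 hy
    calc avgOp μ I f x ≤ ∫⁻ y, ({y | a < f y}.indicator f y + a) ∂μ[|I] := by
          rw [avgOp_of_mem hx]
          exact lintegral_mono hsplit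
      _ = avgOp μ I ({y | a < f y}.indicator f) x + a * μ[univ | I] := by
          rw [lintegral_add_right _ measurable_const, lintegral_const, avgOp_of_mem hx]
      _ ≤ maxOp L μ ({y | a < f y}.indicator f) x + a := by
          gcongr
          · exact avgOp_le_maxOp I.2 x
          · exact mul_le_of_le_one_right' prob_le_one
  · simp [avgOp_of_notMem hx]

theorem mul_measure_lt_maxOp_le_lintegral (L : LatticeFamily X) (f : X → ℝ≥0∞) (a : ℝ≥0∞) :
    a * μ {x | a < maxOp L μ f x} ≤ ∫⁻ x, f x ∂μ := by
  set F : Set (Set X) := {I | I ∈ L.sets ∧ a < (∫⁻ y in I, f y ∂μ) / μ I}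
  have hF : F ⊆ L.sets := fun I hI => hI.1
  have hlevel : {x | a < maxOp L μ f x} = ⋃₀ F := by
    ext x
    simp only [maxOp, lt_iSup_iff, mem_ofPred_eq, mem_sUnion, F]
    tauto
  rw [hlevel]
  exact mul_measure_sUnion_le_lintegral (L.countable_sets.mono hF)
    (fun I hI => LatticeFamily.measurableSet_of_mem_sets (hF hI))
    (L.pairwise_subset_or_disjoint.mono hF) fun I hI => ENNReal.mul_le_of_le_div hI.2.le

theorem mul_measure_two_mul_lt_maxOp_le (L : LatticeFamily X) (hf : Measurable f) {a : ℝ≥0∞}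
    (ha : a ≠ ∞) :
    a * μ {x | 2 * a < maxOp L μ f x} ≤ ∫⁻ x in {x | a < f x}, f x ∂μ := by
  have hsub : {x | 2 * a < maxOp L μ f x} ⊆
      {x | a < maxOp L μ ({y | a < f y}.indicator f) x} := fun x hx => by
    have hlt : a + a < maxOp L μ ({y | a < f y}.indicator f) x + a :=
      two_mul a ▸ lt_of_lt_of_le hx (maxOp_le_maxOp_indicator_add a x)
    exact (ENNReal.add_lt_add_iff_right ha).1 hlt
  calc a * μ {x | 2 * a < maxOp L μ f x}
      ≤ a * μ {x | a < maxOp L μ ({y | a < f y}.indicator f) x} := by gcongr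
    _ ≤ ∫⁻ x, {y | a < f y}.indicator f x ∂μ := mul_measure_lt_maxOp_le_lintegral L _ a
    _ = ∫⁻ x in {x | a < f x}, f x ∂μ :=
        lintegral_indicator (measurableSet_lt measurable_const hf) f

/-- A constant in the `L^r` bound `∫ (M f) ^ r ≤ maxOpConst r * ∫ f ^ r` for the lattice maximal
function, `1 < r < ∞`. -/
noncomputable def maxOpConst (r : ℝ) : ℝ≥0∞ :=
  2 ^ r * (ENNReal.ofReal r / ENNReal.ofReal (r - 1))

theorem one_le_maxOpConst {r : ℝ} (hr : 1 < r) : 1 ≤ maxOpConst r := by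
  refine one_le_mul (ENNReal.one_le_rpow one_le_two (by linarith)) ?_
  rw [ENNReal.le_div_iff_mul_le (Or.inl (by simpa using hr)) (Or.inl ofReal_ne_top), one_mul]
  exact ENNReal.ofReal_le_ofReal (by linarith)

theorem maxOpConst_lt_top {r : ℝ} (hr : 1 < r) : maxOpConst r < ∞ :=
  ENNReal.mul_lt_top (ENNReal.rpow_lt_top_of_nonneg (by linarith) ofNat_ne_top)
    (ENNReal.div_lt_top ofReal_ne_top (by simpa using hr))

theorem lintegral_maxOp_rpow_le (L : LatticeFamily X) (hf : Measurable f) {r : ℝ} (hr : 1 < r) :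
    ∫⁻ x, maxOp L μ f x ^ r ∂μ ≤ maxOpConst r * ∫⁻ x, f x ^ r ∂μ := by
  have hr0 : 0 ≤ r := by linarith
  have hweak : ∀ t : ℝ, 0 < t →
      ENNReal.ofReal t * μ {x | ENNReal.ofReal t < maxOp L μ f x / 2} ≤
        ∫⁻ x in {x | ENNReal.ofReal t < f x}, f x ∂μ := fun t _ => by
    simpa only [ENNReal.lt_div_iff_mul_lt (Or.inl two_ne_zero) (Or.inl ofNat_ne_top),
      mul_comm _ (2 : ℝ≥0∞)] using mul_measure_two_mul_lt_maxOp_le L hf ofReal_ne_top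
  calc ∫⁻ x, maxOp L μ f x ^ r ∂μ = 2 ^ r * ∫⁻ x, (maxOp L μ f x / 2) ^ r ∂μ := by
        rw [← lintegral_const_mul _ ((measurable_maxOp.div_const 2).pow_const r)]
        refine lintegral_congr fun x => ?_
        rw [← ENNReal.mul_rpow_of_nonneg _ _ hr0, ENNReal.mul_div_cancel two_ne_zero ofNat_ne_top]
    _ ≤ 2 ^ r * (ENNReal.ofReal r / ENNReal.ofReal (r - 1) * ∫⁻ x, f x ^ r ∂μ) := by
        gcongr
        exact lintegral_rpow_le_of_mul_meas_lt_le hr hf (measurable_maxOp.div_const 2) hweak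
    _ = maxOpConst r * ∫⁻ x, f x ^ r ∂μ := (mul_assoc _ _ _).symm

theorem avgOp_le_avgOp_maxOp_rpow {I : Set X} (hI : I ∈ L.sets) (h0 : μ I ≠ 0) (htop : μ I ≠ ∞)
    {q : ℝ} (hq : 0 < q) (x : X) :
    avgOp μ I f x ≤ avgOp μ I (fun y => maxOp L μ f y ^ (1 / q)) x ^ q := by
  by_cases hx : x ∈ I
  · have := cond_isProbabilityMeasure_of_finite h0 htop
    rw [← ENNReal.rpow_inv_le_iff hq, ← one_div]
    calc avgOp μ I f x ^ (1 / q) = ∫⁻ _, avgOp μ I f x ^ (1 / q) ∂μ[|I] := by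
          rw [lintegral_const, measure_univ, mul_one]
      _ ≤ ∫⁻ y, maxOp L μ f y ^ (1 / q) ∂μ[|I] := by
          refine lintegral_mono_ae ?_
          filter_upwards [ae_cond_mem (LatticeFamily.measurableSet_of_mem_sets hI)] with y hy
          gcongr
          simpa only [avgOp_of_mem hx, avgOp_of_mem hy] using avgOp_le_maxOp (f := f) hI y
      _ = avgOp μ I (fun y => maxOp L μ f y ^ (1 / q)) x := (avgOp_of_mem hx).symm
  · simp [avgOp_of_notMem hx]

end maxOp

section inequalities

/-- The vector-valued inequality `‖(α_I E_I^μ f)_I‖_{L^p(ν; ℓ^q)} ≤ C ‖f‖_{L^p(μ)}`, raised to the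
power `p`. Nonnegative extended real `f` suffice, since `|E_I^μ f| ≤ E_I^μ |f|`. -/
def VectorValuedInequality (L : LatticeFamily X) (μ ν : Measure X) (α : Set X → ℝ≥0) (p q : ℝ)
    (C : ℝ≥0∞) : Prop :=
  ∀ f : X → ℝ≥0∞, Measurable f →
    ∫⁻ x, (∑' I : L.sets, ((α I.1 : ℝ≥0∞) * avgOp μ I.1 f x) ^ q) ^ (p / q) ∂ν
      ≤ C ^ p * ∫⁻ x, f x ^ p ∂μ

/-- The scalar inequality `‖∑_I α_I^q E_I^μ h‖_{L^{p/q}(ν)} ≤ C ‖h‖_{L^{p/q}(μ)}`, raised to the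
power `p / q`, for nonnegative extended real `h`. -/
def ScalarInequality (L : LatticeFamily X) (μ ν : Measure X) (α : Set X → ℝ≥0) (p q : ℝ)
    (C : ℝ≥0∞) : Prop :=
  ∀ h : X → ℝ≥0∞, Measurable h →
    ∫⁻ x, (∑' I : L.sets, (α I.1 : ℝ≥0∞) ^ q * avgOp μ I.1 h x) ^ (p / q) ∂ν
      ≤ C ^ (p / q) * ∫⁻ x, h x ^ (p / q) ∂μ

variable {L : LatticeFamily X} {α : Set X → ℝ≥0} {p q : ℝ} {C : ℝ≥0∞}

theorem VectorValuedInequality.scalarInequality (hvec : VectorValuedInequality L μ ν α p q C)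
    (hμ : ∀ I ∈ L.sets, 0 < μ I ∧ μ I < ∞) (hq : 0 < q) (hqp : q < p) :
    ScalarInequality L μ ν α p q (maxOpConst (p / q) ^ (p / q)⁻¹ * C ^ q) := by
  intro h hh
  have hr : 1 < p / q := (one_lt_div hq).2 hqp
  have hr0 : 0 < p / q := zero_lt_one.trans hr
  set g : X → ℝ≥0∞ := fun y => maxOp L μ h y ^ (1 / q)
  have hpoint : ∀ x, ∑' I : L.sets, (α I.1 : ℝ≥0∞) ^ q * avgOp μ I.1 h x ≤
      ∑' I : L.sets, ((α I.1 : ℝ≥0∞) * avgOp μ I.1 g x) ^ q := fun x => by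
    refine ENNReal.tsum_le_tsum fun I => ?_
    obtain ⟨h0, htop⟩ := hμ I.1 I.2
    rw [ENNReal.mul_rpow_of_nonneg _ _ hq.le]
    gcongr
    exact avgOp_le_avgOp_maxOp_rpow I.2 h0.ne' htop.ne hq x
  calc ∫⁻ x, (∑' I : L.sets, (α I.1 : ℝ≥0∞) ^ q * avgOp μ I.1 h x) ^ (p / q) ∂ν
      ≤ ∫⁻ x, (∑' I : L.sets, ((α I.1 : ℝ≥0∞) * avgOp μ I.1 g x) ^ q) ^ (p / q) ∂ν :=
        lintegral_mono fun x => ENNReal.rpow_le_rpow (hpoint x) hr0.le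
    _ ≤ C ^ p * ∫⁻ x, g x ^ p ∂μ := hvec g (measurable_maxOp.pow_const _)
    _ = C ^ p * ∫⁻ x, maxOp L μ h x ^ (p / q) ∂μ := by
        simp only [g, ← ENNReal.rpow_mul, one_div_mul_eq_div]
    _ ≤ C ^ p * (maxOpConst (p / q) * ∫⁻ x, h x ^ (p / q) ∂μ) := by
        gcongr
        exact lintegral_maxOp_rpow_le L hh hr
    _ = (maxOpConst (p / q) ^ (p / q)⁻¹ * C ^ q) ^ (p / q) * ∫⁻ x, h x ^ (p / q) ∂μ := by
        rw [ENNReal.mul_rpow_of_nonneg _ _ hr0.le, ENNReal.rpow_inv_rpow hr0.ne',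
          ← ENNReal.rpow_mul, mul_div_cancel₀ _ hq.ne']
        ring

theorem ScalarInequality.vectorValuedInequality (hscalar : ScalarInequality L μ ν α p q C)
    (hμ : ∀ I ∈ L.sets, 0 < μ I ∧ μ I < ∞) (hq : 1 ≤ q) (hp : 0 ≤ p) :
    VectorValuedInequality L μ ν α p q (C ^ (1 / q)) := by
  intro f hf
  have hq0 : 0 < q := zero_lt_one.trans_le hq
  have hpoint : ∀ x, ∑' I : L.sets, ((α I.1 : ℝ≥0∞) * avgOp μ I.1 f x) ^ q ≤
      ∑' I : L.sets, (α I.1 : ℝ≥0∞) ^ q * avgOp μ I.1 (fun y => f y ^ q) x := fun x => by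
    refine ENNReal.tsum_le_tsum fun I => ?_
    obtain ⟨h0, htop⟩ := hμ I.1 I.2
    rw [ENNReal.mul_rpow_of_nonneg _ _ hq0.le]
    gcongr
    exact avgOp_rpow_le h0.ne' htop.ne hf hq x
  calc ∫⁻ x, (∑' I : L.sets, ((α I.1 : ℝ≥0∞) * avgOp μ I.1 f x) ^ q) ^ (p / q) ∂ν
      ≤ ∫⁻ x, (∑' I : L.sets, (α I.1 : ℝ≥0∞) ^ q *
          avgOp μ I.1 (fun y => f y ^ q) x) ^ (p / q) ∂ν :=
        lintegral_mono fun x => ENNReal.rpow_le_rpow (hpoint x) (div_nonneg hp hq0.le)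
    _ ≤ C ^ (p / q) * ∫⁻ x, (f x ^ q) ^ (p / q) ∂μ := hscalar _ (hf.pow_const q)
    _ = (C ^ (1 / q)) ^ p * ∫⁻ x, f x ^ p ∂μ := by
        simp only [← ENNReal.rpow_mul, mul_div_cancel₀ p hq0.ne', one_div_mul_eq_div]

theorem VectorValuedInequality.mono {C₁ C₂ : ℝ≥0∞} (hvec : VectorValuedInequality L μ ν α p q C₁)
    (hC : C₁ ≤ C₂) (hp : 0 ≤ p) : VectorValuedInequality L μ ν α p q C₂ := fun f hf =>
  (hvec f hf).trans (by gcongr)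

end inequalities

end

theorem vector_valued_iff_scalar_general (p q : ℝ) (hq : 1 ≤ q) (hqp : q < p) :
    ∃ c : ℝ≥0∞, 0 < c ∧ c < ∞ ∧
      ∀ (X : Type u) [MeasurableSpace X] (L : LatticeFamily X) (μ ν : Measure X),
        (∀ I ∈ L.sets, 0 < μ I ∧ μ I < ∞) → ∀ α : Set X → ℝ≥0,
        (∀ C : ℝ≥0∞, VectorValuedInequality L μ ν α p q C →
          ScalarInequality L μ ν α p q (c * C ^ q)) ∧
        (∀ C' : ℝ≥0∞, ScalarInequality L μ ν α p q C' →
          VectorValuedInequality L μ ν α p q ((c * C') ^ (1 / q))) := by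
  have hq0 : 0 < q := zero_lt_one.trans_le hq
  have hr : 1 < p / q := (one_lt_div hq0).2 hqp
  have hr0 : 0 < (p / q)⁻¹ := inv_pos.2 (zero_lt_one.trans hr)
  have hc : 1 ≤ maxOpConst (p / q) ^ (p / q)⁻¹ := ENNReal.one_le_rpow (one_le_maxOpConst hr) hr0
  refine ⟨maxOpConst (p / q) ^ (p / q)⁻¹, zero_lt_one.trans_le hc,
    ENNReal.rpow_lt_top_of_nonneg hr0.le (maxOpConst_lt_top hr).ne, fun X _ L μ ν hμ α =>
    ⟨fun C hvec => hvec.scalarInequality hμ hq0 hqp, fun C' hscalar => ?_⟩⟩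
  refine (hscalar.vectorValuedInequality hμ hq (hq0.trans hqp).le).mono ?_ (hq0.trans hqp).le
  gcongr
  exact le_mul_of_one_le_left' hc

/-- For `1 ≤ q < p < ∞`, the vector-valued inequality with constant `C`
holds iff the scalar inequality (for the operator `h ↦ ∑_I α_I^q E_I^μ h` from `L^{p/q}(μ)`
to `L^{p/q}(ν)`) holds with constant `C'`, with `C^q` and `C'` comparable up to constants
depending only on `p, q`. -/
theorem vector_valued_iff_scalar (p q : ℝ) (hq : 1 ≤ q) (hqp : q < p) :
    ∃ c : ℝ≥0∞, 0 < c ∧ c < ∞ ∧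
      ∀ (X : Type) [MeasurableSpace X] (L : LatticeFamily X) (μ ν : Measure X),
        (∀ I ∈ L.sets, 0 < μ I ∧ μ I < ∞) → (∀ I ∈ L.sets, ν I < ∞) →
        ∀ α : Set X → ℝ≥0,
        (∀ C : ℝ≥0∞, C < ∞ →
          (∀ f : X → ℝ≥0∞, Measurable f →
            ∫⁻ x, (∑' I : L.sets, ((α I.1 : ℝ≥0∞) * avgOp μ I.1 f x) ^ q) ^ (p / q) ∂ν
              ≤ C ^ p * ∫⁻ x, f x ^ p ∂μ) →
          ∀ h : X → ℝ≥0∞, Measurable h →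
            ∫⁻ x, (∑' I : L.sets, (α I.1 : ℝ≥0∞) ^ q * avgOp μ I.1 h x) ^ (p / q) ∂ν
              ≤ (c * C ^ q) ^ (p / q) * ∫⁻ x, h x ^ (p / q) ∂μ) ∧
        (∀ C' : ℝ≥0∞, C' < ∞ →
          (∀ h : X → ℝ≥0∞, Measurable h →
            ∫⁻ x, (∑' I : L.sets, (α I.1 : ℝ≥0∞) ^ q * avgOp μ I.1 h x) ^ (p / q) ∂ν
              ≤ C' ^ (p / q) * ∫⁻ x, h x ^ (p / q) ∂μ) →
          ∀ f : X → ℝ≥0∞, Measurable f →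
            ∫⁻ x, (∑' I : L.sets, ((α I.1 : ℝ≥0∞) * avgOp μ I.1 f x) ^ q) ^ (p / q) ∂ν
              ≤ ((c * C') ^ (1 / q)) ^ p * ∫⁻ x, f x ^ p ∂μ) := by
  obtain ⟨c, hc0, hctop, h⟩ := vector_valued_iff_scalar_general p q hq hqp
  exact ⟨c, hc0, hctop, fun X _ L μ ν hμ _ α =>
    ⟨fun C _ => (h X L μ ν hμ α).1 C, fun C' _ => (h X L μ ν hμ α).2 C'⟩⟩
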